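/- Let 𝒳 and 𝒲 be standard Borel spaces, R a probability measure on 𝒲, f : 𝒳 × 𝒲 → 𝒳 measurable with t-step transition maps F_t, and P_* a nominal invariant state distribution ((P_* × R) ∘ f⁻¹ = P_*). For t ≥ 1 and probability measures Φ, Ψ on 𝒳, define J_t(Φ, Ψ) := inf { ∫_𝒳 D(κ(x) ‖ R^{⊗t}) dΦ(x) : κ a Markov kernel from 𝒳 to 𝒲^t with κ(x) ≪ R^{⊗t} for Φ-a.e. x and (Φ ⊗ κ) ∘ F_t⁻¹ = Ψ }, valued in [0,∞]. Then for any probability measures Φ ≪ P_* and Ψ on 𝒳 and any t ≥ 1, the lower bound holds: J_t(Φ, Ψ) + D(Φ ‖ P_*) ≥ D(Ψ ‖ P_*). -/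

import Mathlib

open MeasureTheory ProbabilityTheory
open scoped ENNReal ProbabilityTheory Classical

/-- Kullback-Leibler divergence `D(P ‖ Q)`, valued in `[0,∞]`.  For probability measures with
`P ≪ Q` it equals `∫ log (dP/dQ) dP`, computed here in the equivalent nonnegative form
`∫⁻ (φ log φ - φ + 1) dQ` where `φ = dP/dQ`; it is `∞` when `¬ P ≪ Q`. -/
noncomputable def klDiv {α : Type*} [MeasurableSpace α] (P Q : Measure α) : ℝ≥0∞ :=
  if P ≪ Q then
    ∫⁻ x, ENNReal.ofReal ((P.rnDeriv Q x).toReal * Real.log (P.rnDeriv Q x).toReal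
      - (P.rnDeriv Q x).toReal + 1) ∂Q
  else ∞

/-- The `t`-step state transition maps: `F 0 (x, _) = x` and
`F (k+1) (x, w₀, …, w_k) = f (F k (x, w₀, …, w_{k-1}), w_k)`. -/
def stateTrans {𝒳 𝒲 : Type*} (f : 𝒳 × 𝒲 → 𝒳) : (t : ℕ) → 𝒳 × (Fin t → 𝒲) → 𝒳
  | 0, p => p.1
  | t + 1, p => f (stateTrans f t (p.1, fun i => p.2 i.castSucc), p.2 (Fin.last t))

/-- The minimum required conditional relative entropy supply to drive the state distribution
from `Φ` to `Ψ` under the transition map `F : 𝒳 × 𝒱 → 𝒳` (for `J_t` take `𝒱 = 𝒲^t`,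
`F = F_t` and `Rt = R^{⊗t}`): the infimum over all Markov kernels `κ` with `κ x ≪ Rt` for
`Φ`-a.e. `x` and `(Φ ⊗ κ) ∘ F⁻¹ = Ψ` of `∫ D(κ(x) ‖ Rt) dΦ(x)`, with `inf ∅ = ∞`. -/
noncomputable def reqSupply {𝒳 𝒱 : Type*} [MeasurableSpace 𝒳] [MeasurableSpace 𝒱]
    (F : 𝒳 × 𝒱 → 𝒳) (Rt : Measure 𝒱) (Φ Ψ : Measure 𝒳) : ℝ≥0∞ :=
  ⨅ (κ : Kernel 𝒳 𝒱) (_ : IsMarkovKernel κ) (_ : ∀ᵐ x ∂Φ, κ x ≪ Rt)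
    (_ : (Φ ⊗ₘ κ).map F = Ψ), ∫⁻ x, klDiv (κ x) Rt ∂Φ

/-! By invariance, `F_t` maps `P_* ⊗ R^{⊗t}` to `P_*`, while for an admissible kernel `κ` it maps
`Φ ⊗ κ` to `Ψ`. The data-processing inequality therefore bounds `D(Ψ ‖ P_*)` by
`D(Φ ⊗ κ ‖ P_* ⊗ R^{⊗t})`, which the chain rule splits into `D(Φ ‖ P_*)` and
`D(Φ ⊗ κ ‖ Φ ⊗ R^{⊗t})`. A jointly measurable version of the densities `dκ(x)/dR^{⊗t}` is the
density of `Φ ⊗ κ` with respect to `Φ ⊗ R^{⊗t}`, so the second term is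
`∫ D(κ(x) ‖ R^{⊗t}) dΦ(x)`. -/

open InformationTheory (klFun klFun_apply klDiv_eq_lintegral_klFun_of_ac)

section KernelDivergence

variable {α β : Type*} [MeasurableSpace α] [MeasurableSpace β]
  [MeasurableSpace.CountableOrCountablyGenerated α β]
  {μ : Measure α} [IsFiniteMeasure μ] {κ η : Kernel α β} [IsFiniteKernel κ] [IsFiniteKernel η]

theorem rnDeriv_measure_compProd_right (h : ∀ᵐ x ∂μ, κ x ≪ η x) :
    (μ ⊗ₘ κ).rnDeriv (μ ⊗ₘ η) =ᵐ[μ ⊗ₘ η] fun p ↦ κ.rnDeriv η p.1 p.2 := by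
  have hκ : κ =ᵐ[μ] η.withDensity (κ.rnDeriv η) := by
    filter_upwards [h] with x hx using (Kernel.withDensity_rnDeriv_eq hx).symm
  rw [Measure.compProd_congr hκ, Measure.compProd_withDensity (Kernel.measurable_rnDeriv κ η)]
  exact Measure.rnDeriv_withDensity _ (Kernel.measurable_rnDeriv κ η)

theorem klDiv_compProd_right_of_ac (h : ∀ᵐ x ∂μ, κ x ≪ η x) :
    InformationTheory.klDiv (μ ⊗ₘ κ) (μ ⊗ₘ η) =
      ∫⁻ x, InformationTheory.klDiv (κ x) (η x) ∂μ := by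
  calc InformationTheory.klDiv (μ ⊗ₘ κ) (μ ⊗ₘ η)
      = ∫⁻ p, ENNReal.ofReal (klFun ((μ ⊗ₘ κ).rnDeriv (μ ⊗ₘ η) p).toReal) ∂(μ ⊗ₘ η) :=
        klDiv_eq_lintegral_klFun_of_ac (Measure.absolutelyContinuous_compProd_right_iff.2 h)
    _ = ∫⁻ p, ENNReal.ofReal (klFun (κ.rnDeriv η p.1 p.2).toReal) ∂(μ ⊗ₘ η) := by
        refine lintegral_congr_ae ?_
        filter_upwards [rnDeriv_measure_compProd_right h] with p hp
        rw [hp]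
    _ = ∫⁻ x, ∫⁻ y, ENNReal.ofReal (klFun (κ.rnDeriv η x y).toReal) ∂(η x) ∂μ :=
        Measure.lintegral_compProd (by fun_prop)
    _ = ∫⁻ x, InformationTheory.klDiv (κ x) (η x) ∂μ := by
        refine lintegral_congr_ae ?_
        filter_upwards [h] with x hx
        rw [klDiv_eq_lintegral_klFun_of_ac hx]
        refine lintegral_congr_ae ?_
        filter_upwards [κ.rnDeriv_eq_rnDeriv_measure (η := η) (a := x)] with y hy
        rw [hy]

variable (μ κ η) in
theorem klDiv_compProd_right :
    InformationTheory.klDiv (μ ⊗ₘ κ) (μ ⊗ₘ η) =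
      ∫⁻ x, InformationTheory.klDiv (κ x) (η x) ∂μ := by
  by_cases h : ∀ᵐ x ∂μ, κ x ≪ η x
  · exact klDiv_compProd_right_of_ac h
  have hpos : μ {x | κ x ≪ η x}ᶜ ≠ 0 := h
  rw [InformationTheory.klDiv_of_not_ac fun hac ↦
      h (Measure.absolutelyContinuous_compProd_right_iff.1 hac), eq_comm, eq_top_iff]
  calc ∞ = ∫⁻ _ in {x | κ x ≪ η x}ᶜ, ∞ ∂μ := by simp [hpos]
    _ = ∫⁻ x in {x | κ x ≪ η x}ᶜ, InformationTheory.klDiv (κ x) (η x) ∂μ :=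
        setLIntegral_congr_fun (Kernel.measurableSet_absolutelyContinuous κ η).compl
          fun _ hx ↦ (InformationTheory.klDiv_of_not_ac hx).symm
    _ ≤ ∫⁻ x, InformationTheory.klDiv (κ x) (η x) ∂μ := setLIntegral_le_lintegral _ _

end KernelDivergence

theorem klDiv_map_compProd_le {α β γ : Type*} [MeasurableSpace α] [MeasurableSpace β]
    [MeasurableSpace γ] [MeasurableSpace.CountableOrCountablyGenerated α β]
    {P : Measure α} [IsFiniteMeasure P] {V : Measure β} [IsProbabilityMeasure V]
    {Q : Measure γ} {F : α × β → γ} (hF : MeasurePreserving F (P.prod V) Q)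
    (μ : Measure α) [IsFiniteMeasure μ] (κ : Kernel α β) [IsMarkovKernel κ] :
    InformationTheory.klDiv ((μ ⊗ₘ κ).map F) Q ≤
      ∫⁻ x, InformationTheory.klDiv (κ x) V ∂μ + InformationTheory.klDiv μ P :=
  calc InformationTheory.klDiv ((μ ⊗ₘ κ).map F) Q
      = InformationTheory.klDiv ((μ ⊗ₘ κ).map F) ((P ⊗ₘ Kernel.const α V).map F) := by
        rw [Measure.compProd_const, hF.map_eq]
    _ ≤ InformationTheory.klDiv (μ ⊗ₘ κ) (P ⊗ₘ Kernel.const α V) :=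
        InformationTheory.klDiv_map_le _ _ hF.measurable
    _ = InformationTheory.klDiv μ P + InformationTheory.klDiv (μ ⊗ₘ κ) (μ ⊗ₘ Kernel.const α V) :=
        InformationTheory.klDiv_compProd_eq_add _ _ _ _
    _ = ∫⁻ x, InformationTheory.klDiv (κ x) V ∂μ + InformationTheory.klDiv μ P := by
        simp_rw [klDiv_compProd_right, Kernel.const_apply, add_comm]

theorem measurePreserving_pi_castSucc_last {𝒲 : Type*} [MeasurableSpace 𝒲] {n : ℕ}
    (μ : Fin (n + 1) → Measure 𝒲) [∀ i, SigmaFinite (μ i)] :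
    MeasurePreserving (fun w ↦ (fun i : Fin n ↦ w i.castSucc, w (Fin.last n)))
      (Measure.pi μ) ((Measure.pi fun i ↦ μ i.castSucc).prod (μ (Fin.last n))) := by
  have h := Measure.measurePreserving_swap.comp (measurePreserving_piFinSuccAbove μ (Fin.last n))
  simp only [Fin.succAbove_last] at h
  convert h using 2 with w
  ext i <;> simp [Fin.init]

theorem measurePreserving_stateTrans {𝒳 𝒲 : Type*} [MeasurableSpace 𝒳] [MeasurableSpace 𝒲]
    {R : Measure 𝒲} [IsProbabilityMeasure R] {P : Measure 𝒳} [SFinite P] {f : 𝒳 × 𝒲 → 𝒳}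
    (hf : MeasurePreserving f (P.prod R) P) (t : ℕ) :
    MeasurePreserving (stateTrans f t) (P.prod (Measure.pi fun _ : Fin t ↦ R)) P := by
  induction t with
  | zero => exact measurePreserving_fst
  | succ t ih =>
    have hsplit := (MeasurePreserving.id P).prod
      (measurePreserving_pi_castSucc_last fun _ : Fin (t + 1) ↦ R)
    have hassoc := (measurePreserving_prodAssoc P (Measure.pi fun _ : Fin t ↦ R) R).symm
    exact hf.comp ((ih.prod (MeasurePreserving.id R)).comp (hassoc.comp hsplit))

theorem klDiv_eq_informationTheory_klDiv {α : Type*} [MeasurableSpace α] (P Q : Measure α)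
    [IsFiniteMeasure P] [IsFiniteMeasure Q] : klDiv P Q = InformationTheory.klDiv P Q := by
  simp only [klDiv, InformationTheory.klDiv_eq_lintegral_klFun, klFun_apply, sub_add_eq_add_sub]

theorem reqSupply_lower_bound_general {𝒳 𝒱 : Type*} [MeasurableSpace 𝒳] [MeasurableSpace 𝒱]
    [MeasurableSpace.CountableOrCountablyGenerated 𝒳 𝒱]
    {V : Measure 𝒱} [IsProbabilityMeasure V] {P Q : Measure 𝒳} [IsFiniteMeasure P]
    {F : 𝒳 × 𝒱 → 𝒳} (hF : MeasurePreserving F (P.prod V) Q)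
    (Φ Ψ : Measure 𝒳) [IsFiniteMeasure Φ] :
    klDiv Ψ Q ≤ reqSupply F V Φ Ψ + klDiv Φ P := by
  have : IsFiniteMeasure Q := hF.map_eq ▸ inferInstance
  simp only [reqSupply, ENNReal.iInf_add, le_iInf_iff]
  rintro κ _ - rfl
  simpa only [klDiv_eq_informationTheory_klDiv] using klDiv_map_compProd_le hF Φ κ

/-- Lower bound on the minimum required supply: `J_t(Φ, Ψ) + D(Φ ‖ P_*) ≥ D(Ψ ‖ P_*)`. -/
theorem reqSupply_lower_bound
    {𝒳 𝒲 : Type*} [MeasurableSpace 𝒳] [StandardBorelSpace 𝒳]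
    [MeasurableSpace 𝒲] [StandardBorelSpace 𝒲]
    (R : Measure 𝒲) [IsProbabilityMeasure R]
    (f : 𝒳 × 𝒲 → 𝒳) (hf : Measurable f)
    (Pstar : Measure 𝒳) [IsProbabilityMeasure Pstar]
    (hinv : (Pstar.prod R).map f = Pstar)
    (t : ℕ) (ht : 1 ≤ t)
    (Φ Ψ : Measure 𝒳) [IsProbabilityMeasure Φ] [IsProbabilityMeasure Ψ]
    (hΦ : Φ ≪ Pstar) :
    klDiv Ψ Pstar
      ≤ reqSupply (stateTrans f t) (Measure.pi fun _ : Fin t => R) Φ Ψ + klDiv Φ Pstar :=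
  reqSupply_lower_bound_general (measurePreserving_stateTrans ⟨hf, hinv⟩ t) Φ Ψ
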